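/- Let f(z) = z + exp(−z). If z ∈ ℂ satisfies Re z > −1 and |Im z| < π/2, then Re f(z) > Re z (in particular Re f(z) > −1) and |Im f(z)| < π/2. Hence the set V := {z : Re z > −1 and |Im z| < π/2} is forward invariant under f: f(V) ⊆ V. -/

import Mathlib

/-!
Write `z = x + iy` and `c = exp (-x)`, so `0 < c < e` on `V`, and
`f z = (x + c cos y) + i (y - c sin y)`. The real part grows because `cos y > 0`. For the imaginary
part, by oddness in `y` one may take `0 ≤ y < π/2`; then `y - c sin y ≤ y < π/2`, while
`y - c sin y > -π/2` follows from `e sin y < y + π/2` (`exp_one_mul_sin_lt`).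
-/

open Complex Filter Topology Set

noncomputable def f : ℂ → ℂ := fun z => z + Complex.exp (-z)

/-- The absorbing domain `V` of the Baker domain of `f` in the strip `S`. -/
def V : Set ℂ := {z : ℂ | -1 < z.re ∧ |z.im| < Real.pi / 2}

/-- Away from `π/2` the bound `sin y ≤ y` suffices; within distance `1` of `π/2` the Taylor
estimate of `cos (π/2 - y)` reduces the claim to a quadratic with negative discriminant. -/
lemma exp_one_mul_sin_lt {y : ℝ} (h0 : 0 ≤ y) (h1 : y < Real.pi / 2) :
    Real.exp 1 * Real.sin y < y + Real.pi / 2 := by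
  have he := Real.exp_one_lt_d9
  have he' := Real.exp_one_gt_d9
  have hp := Real.pi_gt_d2
  have hp' := Real.pi_lt_d2
  rcases le_total (Real.pi / 2 - y) 1 with h | h
  · obtain ⟨t, ht⟩ : ∃ t, t = Real.pi / 2 - y := ⟨_, rfl⟩
    have hs : Real.sin y = Real.cos t := by rw [ht, Real.cos_pi_div_two_sub]
    have ht0 : 0 < t := by linarith
    have ht1 : t ≤ 1 := by linarith
    have hb := (abs_le.1 (Real.cos_bound (x := t) (by rw [abs_of_pos ht0]; exact ht1))).2
    rw [abs_of_pos ht0] at hb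
    have h4 : t ^ 4 ≤ t ^ 2 := pow_le_pow_of_le_one ht0.le ht1 (by norm_num)
    -- `1/2 - 5/96 = 43/96`
    have hc : Real.cos t ≤ 1 - 43 / 96 * t ^ 2 := by linarith
    have hm := mul_le_mul_of_nonneg_left hc (Real.exp_pos 1).le
    have hq : 2.7 * t ^ 2 ≤ Real.exp 1 * t ^ 2 := by gcongr; linarith
    rw [hs]
    nlinarith [sq_nonneg (t - 0.41)]
  · have hs := mul_le_mul_of_nonneg_left (Real.sin_le h0) (Real.exp_pos 1).le
    nlinarith

lemma abs_sub_mul_sin_lt_of_nonneg {c y : ℝ} (hc : 0 < c) (hce : c < Real.exp 1) (h0 : 0 ≤ y)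
    (h1 : y < Real.pi / 2) : |y - c * Real.sin y| < Real.pi / 2 := by
  have hs : 0 ≤ Real.sin y := Real.sin_nonneg_of_nonneg_of_le_pi h0 (by linarith)
  have := exp_one_mul_sin_lt h0 h1
  have := mul_le_mul_of_nonneg_right hce.le hs
  have := mul_nonneg hc.le hs
  rw [abs_lt]
  constructor <;> linarith

lemma abs_sub_mul_sin_lt {c y : ℝ} (hc : 0 < c) (hce : c < Real.exp 1)
    (h1 : |y| < Real.pi / 2) : |y - c * Real.sin y| < Real.pi / 2 := by
  rcases le_total 0 y with h | h
  · exact abs_sub_mul_sin_lt_of_nonneg hc hce h (abs_lt.1 h1).2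
  · have := abs_sub_mul_sin_lt_of_nonneg hc hce (neg_nonneg.2 h) (by linarith [(abs_lt.1 h1).1])
    rw [Real.sin_neg, ← abs_neg] at this
    convert this using 2
    ring

/-- `V` is forward invariant: for `z ∈ V`, `Re f(z) > Re z > -1` and
`|Im f(z)| < π/2`, so `f(V) ⊆ V`. -/
theorem absorbing_domain_forward_invariant :
    (∀ z : ℂ, -1 < z.re → |z.im| < Real.pi / 2 →
      z.re < (f z).re ∧ |(f z).im| < Real.pi / 2) ∧
    Set.MapsTo f V V := by
  have key : ∀ z : ℂ, -1 < z.re → |z.im| < Real.pi / 2 →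
      z.re < (f z).re ∧ |(f z).im| < Real.pi / 2 := by
    intro z hx hy
    have hre : (f z).re = z.re + Real.exp (-z.re) * Real.cos z.im := by
      simp [f, Complex.exp_re]
    have him : (f z).im = z.im - Real.exp (-z.re) * Real.sin z.im := by
      simp [f, Complex.exp_im, sub_eq_add_neg]
    rw [hre, him]
    refine ⟨?_, abs_sub_mul_sin_lt (Real.exp_pos _) (Real.exp_lt_exp.2 (by linarith)) hy⟩
    have := mul_pos (Real.exp_pos (-z.re)) (Real.cos_pos_of_mem_Ioo (abs_lt.1 hy))
    linarith
  exact ⟨key, fun z hz => ⟨hz.1.trans (key z hz.1 hz.2).1, (key z hz.1 hz.2).2⟩⟩
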